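/- Let 1 < p < ∞, -1 < α < ∞, and 0 < β < 1. Suppose f ∈ A^p_α satisfies ‖f(e^{it}·) + f(e^{-it}·) - 2f(·)‖_{p,α} ≤ M|t|^β for all real t. Let A_β = (2^{1+β}/π) ∫_0^∞ |cos t - cos 2t| · t^{β-2} dt. Then for every n ≥ 1, E_n^{p,α}(f) ≤ A_β · M · n^{-β}. -/

import Mathlib

/-!
The approximant is a de la Vallée Poussin mean. The kernel `κ(s) = (cos s - cos 2s) / s²` has a
Fourier transform that vanishes at frequencies of modulus at least `2`
(`integral_cos_mul_vpKernel`) and has mass `C = ∫_0^∞ (1 - cos t) / t² dt` on the half-line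
(`integral_vpKernel`). Both facts follow from the single scaling identity
`∫_0^∞ (1 - cos at) / t² dt = a C`, so the exact value of `C` is never needed. Averaging
`f(e^{it}z) + f(e^{-it}z)` at `t = 2s/n` against `κ(s) / (2C)` multiplies the `k`-th Taylor
coefficient of `f` by a number that is zero for `k ≥ n`; the result is a polynomial `P`
(`vpMean`) of degree less than `n`, and (`sub_vpMean`)

  `f(z) - P(z) = -(1 / 2C) ∫_0^∞ (f(e^{it}z) + f(e^{-it}z) - 2f(z)) κ(s) ds`,  `t = 2s/n`.

Minkowski's integral inequality (`lintegral_minkowski`) and the hypothesis then bound the norm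
of `f - P` by `(1 / 2C) M (2/n)^β ∫_0^∞ |cos s - cos 2s| s^{β-2} ds`. The stated constant is
reached as soon as `C ≥ π / 4` (`pi_div_four_le_fejerMass`).
-/


open MeasureTheory Complex Set Metric

noncomputable section

/-- The open unit disc in `ℂ`. -/
def unitDisc : Set ℂ := Metric.ball 0 1

/-- The density of the weighted measure `dA_α = (α+1) π⁻¹ (1-|z|²)^α dA`
with respect to area measure. -/
def wt (α : ℝ) (z : ℂ) : ℝ := (α + 1) / Real.pi * (1 - ‖z‖ ^ 2) ^ α

/-- The norm `‖f‖_{p,α}` of the weighted Bergman space `A^p_α`. -/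
def bNorm (p α : ℝ) (f : ℂ → ℂ) : ℝ :=
  (∫ z in unitDisc, ‖f z‖ ^ p * wt α z) ^ (1 / p)

/-- Membership in the weighted Bergman space `A^p_α`: analytic on the unit disc
with finite weighted `p`-norm. -/
def MemAp (p α : ℝ) (f : ℂ → ℂ) : Prop :=
  DifferentiableOn ℂ f unitDisc ∧
    IntegrableOn (fun z => ‖f z‖ ^ p * wt α z) unitDisc

/-- `E_n^{p,α}(f)`: the distance from `f` to the polynomials of degree at most `n`
in the `A^p_α` norm. -/
def polyErr (p α : ℝ) (n : ℕ) (f : ℂ → ℂ) : ℝ :=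
  sInf {e | ∃ P : Polynomial ℂ, P.natDegree ≤ n ∧
    e = bNorm p α fun z => f z - P.eval z}

/-- The constant `A_β = (2^{1+β}/π) ∫_0^∞ |cos t - cos 2t| t^{β-2} dt`. -/
def Acoef (β : ℝ) : ℝ :=
  2 ^ (1 + β) / Real.pi *
    ∫ t in Set.Ioi (0:ℝ), |Real.cos t - Real.cos (2*t)| * t ^ (β - 2)

/-! ### Minkowski's integral inequality -/

/-- Minkowski's integral inequality, for a family `G s` whose `L^p` norms are bounded by `m s`:
Hölder's inequality for `G / m` with respect to the measure `m k dν`, followed by Tonelli. -/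
theorem lintegral_minkowski {X S : Type*} [MeasurableSpace X] [MeasurableSpace S]
    (μ : Measure X) [SFinite μ] (ν : Measure S) [SFinite ν] {p : ℝ} (hp : 1 < p)
    {G : S → X → ENNReal} (hG : Measurable (Function.uncurry G))
    {m k : S → ENNReal} (hm : Measurable m) (hk : Measurable k)
    (hm0 : ∀ᵐ s ∂ν, m s ≠ 0 ∧ m s ≠ ⊤)
    (hGm : ∀ s, ∫⁻ x, G s x ^ p ∂μ ≤ m s ^ p) :
    ∫⁻ x, (∫⁻ s, G s x * k s ∂ν) ^ p ∂μ ≤ (∫⁻ s, m s * k s ∂ν) ^ p := by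
  have hp0 : 0 < p := by linarith
  set ρ := ν.withDensity (fun s => m s * k s) with hρ
  have hρu : ρ univ = ∫⁻ s, m s * k s ∂ν := by
    rw [hρ, withDensity_apply _ MeasurableSet.univ, Measure.restrict_univ]
  have hGx : ∀ x, Measurable fun s => G s x := fun x => hG.comp measurable_prodMk_right
  have hgx : ∀ x, Measurable fun s => G s x / m s := fun x => (hGx x).div hm
  have key : ∀ x, (∫⁻ s, G s x * k s ∂ν) ^ p ≤
      ρ univ ^ (p - 1) * ∫⁻ s, (G s x / m s) ^ p ∂ρ := by
    intro x
    have h1 : ∫⁻ s, G s x * k s ∂ν = ∫⁻ s, G s x / m s ∂ρ := by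
      rw [hρ, lintegral_withDensity_eq_lintegral_mul ν (f := fun s => m s * k s) (hm.mul hk) (hgx x)]
      refine lintegral_congr_ae (hm0.mono fun s hs => ?_)
      simp only [Pi.mul_apply]
      rw [mul_assoc, mul_comm (k s), ← mul_assoc, ENNReal.mul_div_cancel hs.1 hs.2]
    have hpq := Real.HolderConjugate.conjExponent hp
    have h2 := ENNReal.lintegral_mul_le_Lp_mul_Lq ρ hpq
      (hgx x).aemeasurable (g := fun _ => 1) aemeasurable_const
    simp only [Pi.mul_apply, mul_one, ENNReal.one_rpow, lintegral_const, one_mul] at h2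
    rw [h1]
    refine (ENNReal.rpow_le_rpow h2 hp0.le).trans_eq ?_
    rw [ENNReal.mul_rpow_of_nonneg _ _ hp0.le, ← ENNReal.rpow_mul, ← ENNReal.rpow_mul,
      one_div_mul_cancel hp0.ne', ENNReal.rpow_one, mul_comm]
    congr 2
    rw [Real.conjExponent]
    field_simp
  calc ∫⁻ x, (∫⁻ s, G s x * k s ∂ν) ^ p ∂μ
      ≤ ∫⁻ x, ρ univ ^ (p - 1) * ∫⁻ s, (G s x / m s) ^ p ∂ρ ∂μ := lintegral_mono key
    _ = ρ univ ^ (p - 1) * ∫⁻ x, ∫⁻ s, (G s x / m s) ^ p ∂ρ ∂μ := by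
        rw [lintegral_const_mul]
        have : Measurable (Function.uncurry fun (x : X) (s : S) => (G s x / m s) ^ p) :=
          ((hG.comp measurable_swap).div (hm.comp measurable_snd)).pow_const p
        exact this.lintegral_prod_right'
    _ = ρ univ ^ (p - 1) * ∫⁻ s, ∫⁻ x, (G s x / m s) ^ p ∂μ ∂ρ := by
        congr 1
        refine lintegral_lintegral_swap ?_
        exact (((hG.comp measurable_swap).div (hm.comp measurable_snd)).pow_const p).aemeasurable
    _ ≤ ρ univ ^ (p - 1) * ∫⁻ s, 1 ∂ρ := by
        gcongr 1
        refine lintegral_mono_ae ?_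
        have : ∀ᵐ s ∂ρ, m s ≠ 0 ∧ m s ≠ ⊤ :=
          (withDensity_absolutelyContinuous ν _).ae_le hm0
        refine this.mono fun s hs => ?_
        have h3 : ∀ x, (G s x / m s) ^ p = G s x ^ p * (m s ^ p)⁻¹ := fun x => by
          rw [ENNReal.div_rpow_of_nonneg _ _ hp0.le, div_eq_mul_inv]
        simp only [h3]
        have h4 : Measurable fun x => G s x ^ p := (hG.comp measurable_prodMk_left).pow_const p
        rw [lintegral_mul_const _ h4,
          ← div_eq_mul_inv]
        exact ENNReal.div_le_of_le_mul (by simpa using hGm s)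
    _ = (∫⁻ s, m s * k s ∂ν) ^ p := by
        rw [lintegral_const, one_mul, ← hρu]
        nth_rw 2 [← ENNReal.rpow_one (ρ univ)]
        rw [← ENNReal.rpow_add_of_nonneg _ _ (by linarith) zero_le_one]
        congr 1; ring

/-! ### The de la Vallée Poussin kernel -/

theorem abs_one_sub_cos_le (x : ℝ) : |1 - Real.cos x| ≤ 2 ∧ |1 - Real.cos x| ≤ x ^ 2 / 2 := by
  have h1 := Real.cos_le_one x
  have h2 := Real.neg_one_le_cos x
  have h3 := Real.one_sub_sq_div_two_le_cos (x := x)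
  rw [abs_of_nonneg (by linarith)]
  constructor <;> linarith

/-- A continuous numerator which is `O(t²)` at the origin and bounded at infinity can be
integrated on `(0, ∞)` against `t^(γ-2)` for `0 ≤ γ < 1`. -/
theorem integrableOn_kernel {g : ℝ → ℝ} (hg : Continuous g) {c d γ : ℝ} (hγ : 0 ≤ γ) (hγ1 : γ < 1)
    (hc : ∀ t, |g t| ≤ c * t ^ 2) (hd : ∀ t, |g t| ≤ d) :
    IntegrableOn (fun t : ℝ => g t * t ^ (γ - 2)) (Ioi 0) := by
  have hmeas : Measurable fun t : ℝ => g t * t ^ (γ - 2) :=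
    hg.measurable.mul (measurable_id.pow_const _)
  rw [← Ioc_union_Ioi_eq_Ioi (zero_le_one' ℝ)]
  refine IntegrableOn.union ?_ ?_
  · refine Measure.integrableOn_of_bounded (M := c) (by simp) hmeas.aestronglyMeasurable ?_
    refine (ae_restrict_iff' measurableSet_Ioc).2 (Filter.Eventually.of_forall fun t ht => ?_)
    have h0 : 0 ≤ c := by simpa using (abs_nonneg _).trans (hc 1)
    rw [Real.norm_eq_abs, abs_mul, abs_of_nonneg (Real.rpow_nonneg ht.1.le _)]
    calc |g t| * t ^ (γ - 2) ≤ c * t ^ 2 * t ^ (γ - 2) :=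
          mul_le_mul_of_nonneg_right (hc t) (Real.rpow_nonneg ht.1.le _)
      _ = c * t ^ γ := by
          rw [mul_assoc, ← Real.rpow_natCast, ← Real.rpow_add ht.1]; congr 2; push_cast; ring
      _ ≤ c * 1 := by gcongr; exact Real.rpow_le_one ht.1.le ht.2 hγ
      _ = c := mul_one c
  · have h := (integrableOn_Ioi_rpow_of_lt (a := γ - 2) (by linarith) one_pos).const_mul d
    refine Integrable.mono' h hmeas.aestronglyMeasurable ?_
    refine (ae_restrict_iff' measurableSet_Ioi).2 (Filter.Eventually.of_forall fun t ht => ?_)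
    have ht0 : (0 : ℝ) < t := one_pos.trans ht
    rw [Real.norm_eq_abs, abs_mul, abs_of_nonneg (Real.rpow_nonneg ht0.le _)]
    exact mul_le_mul_of_nonneg_right (hd t) (Real.rpow_nonneg ht0.le _)

theorem abs_cos_sub_cos_le (t : ℝ) :
    |Real.cos t - Real.cos (2 * t)| ≤ 2 ∧ |Real.cos t - Real.cos (2 * t)| ≤ 3 * t ^ 2 := by
  have h1 := (abs_one_sub_cos_le t).2
  have h2 := (abs_one_sub_cos_le (2 * t)).2
  rw [abs_le] at *
  have := Real.cos_le_one t
  have := Real.cos_le_one (2 * t)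
  have := Real.neg_one_le_cos t
  have := Real.neg_one_le_cos (2 * t)
  rw [abs_le]
  refine ⟨⟨?_, ?_⟩, ?_, ?_⟩ <;> nlinarith

/-- The de la Vallée Poussin kernel `(cos t - cos 2t) / t²` on the line, up to normalisation.
The real power `t ^ (-2)` matches the exponent `β - 2` in `Acoef`. -/
def vpKernel (t : ℝ) : ℝ := (Real.cos t - Real.cos (2 * t)) * t ^ (-2 : ℝ)

/-- The integral of the Fejér-type function `(1 - cos t) / t²` on the half-line. -/
def fejerMass : ℝ := ∫ t in Ioi (0 : ℝ), (1 - Real.cos t) * t ^ (-2 : ℝ)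

theorem integrableOn_one_sub_cos (a : ℝ) :
    IntegrableOn (fun t : ℝ => (1 - Real.cos (a * t)) * t ^ (-2 : ℝ)) (Ioi 0) := by
  have := integrableOn_kernel (g := fun t => 1 - Real.cos (a * t)) (by fun_prop)
    (c := a ^ 2 / 2) (d := 2) (le_refl 0) one_pos
    (fun t => (abs_one_sub_cos_le _).2.trans_eq (by ring)) (fun t => (abs_one_sub_cos_le _).1)
  simpa only [zero_sub] using this

theorem integral_one_sub_cos {a : ℝ} (ha : 0 ≤ a) :
    ∫ t in Ioi (0 : ℝ), (1 - Real.cos (a * t)) * t ^ (-2 : ℝ) = a * fejerMass := by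
  rcases ha.eq_or_lt with rfl | ha
  · simp
  have h := integral_comp_mul_left_Ioi' (fun t => (1 - Real.cos t) * t ^ (-2 : ℝ)) 0 ha
  have h2 : ∫ t in Ioi (0 : ℝ), (1 - Real.cos (a * t)) * (a * t) ^ (-2 : ℝ) =
      a ^ (-2 : ℝ) * ∫ t in Ioi (0 : ℝ), (1 - Real.cos (a * t)) * t ^ (-2 : ℝ) := by
    rw [← integral_const_mul]
    refine setIntegral_congr_fun measurableSet_Ioi fun t ht => ?_
    rw [Real.mul_rpow ha.le (le_of_lt ht)]; ring
  rw [mul_zero, smul_eq_mul] at h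
  rw [h2] at h
  rw [fejerMass, ← h, ← mul_assoc, ← mul_assoc]
  have : a * a * a ^ (-2 : ℝ) = 1 := by
    rw [Real.rpow_neg ha.le, Real.rpow_two]; field_simp
  rw [this, one_mul]

theorem integrableOn_vpKernel : IntegrableOn vpKernel (Ioi 0) := by
  have := integrableOn_kernel (g := fun t => Real.cos t - Real.cos (2 * t)) (by fun_prop)
    (c := 3) (d := 2) (le_refl 0) one_pos
    (fun t => (abs_cos_sub_cos_le _).2) (fun t => (abs_cos_sub_cos_le _).1)
  simp only [zero_sub] at this
  exact this

theorem integral_vpKernel : ∫ t in Ioi (0 : ℝ), vpKernel t = fejerMass := by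
  have h2 := integral_one_sub_cos (a := 2) (by norm_num)
  have h1 := integral_one_sub_cos (a := 1) (by norm_num)
  have h := integral_sub (integrableOn_one_sub_cos 2) (integrableOn_one_sub_cos 1)
  rw [h1, h2] at h
  rw [show fejerMass = 2 * fejerMass - 1 * fejerMass by ring, ← h]
  congr 1; ext t; rw [vpKernel, one_mul]; ring

/-- The kernel has no Fourier mass at frequencies `≥ 2`. -/
theorem integral_cos_mul_vpKernel {x : ℝ} (hx : 2 ≤ x) :
    ∫ t in Ioi (0 : ℝ), Real.cos (x * t) * vpKernel t = 0 := by
  have i1 := integrableOn_one_sub_cos (x + 1)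
  have i2 := integrableOn_one_sub_cos (x - 1)
  have i3 := integrableOn_one_sub_cos (x + 2)
  have i4 := integrableOn_one_sub_cos (x - 2)
  have h := integral_sub (i3.add i4) (i1.add i2)
  rw [integral_add' i3 i4, integral_add' i1 i2, integral_one_sub_cos (by linarith),
    integral_one_sub_cos (by linarith), integral_one_sub_cos (by linarith),
    integral_one_sub_cos (by linarith)] at h
  have e : ∀ t : ℝ, Real.cos (x * t) * vpKernel t = 1 / 2 *
      (((1 - Real.cos ((x + 2) * t)) * t ^ (-2 : ℝ) + (1 - Real.cos ((x - 2) * t)) * t ^ (-2 : ℝ))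
      - ((1 - Real.cos ((x + 1) * t)) * t ^ (-2 : ℝ)
        + (1 - Real.cos ((x - 1) * t)) * t ^ (-2 : ℝ))) := by
    intro t
    rw [vpKernel, add_mul x, add_mul x, sub_mul x, sub_mul x, one_mul, Real.cos_add, Real.cos_sub,
      Real.cos_add, Real.cos_sub]
    ring
  simp_rw [e]
  rw [integral_const_mul]
  simp only [Pi.add_apply] at h
  rw [h]; ring

/-- The exact value is `π / 2`; half of it is enough here, and it already comes from the
integral over `(0, π]`, by elementary upper bounds for the cosine on `(0, 1]` and `(1, π]`. -/
theorem pi_div_four_le_fejerMass : Real.pi / 4 ≤ fejerMass := by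
  have hI := integrableOn_one_sub_cos 1
  simp only [one_mul] at hI
  have hnn : ∀ t : ℝ, 0 < t → 0 ≤ (1 - Real.cos t) * t ^ (-2 : ℝ) := fun t ht =>
    mul_nonneg (by linarith [Real.cos_le_one t]) (Real.rpow_nonneg ht.le _)
  have hpi := Real.pi_gt_three
  have hpi' := Real.pi_lt_d2
  have s1 : ∫ t in Ioc (0 : ℝ) Real.pi, (1 - Real.cos t) * t ^ (-2 : ℝ) ≤ fejerMass := by
    refine setIntegral_mono_set hI ?_ (Filter.Eventually.of_forall fun t ht => ht.1)
    exact (ae_restrict_iff' measurableSet_Ioi).2 (Filter.Eventually.of_forall fun t ht => hnn t ht)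
  -- `43 / 96 = 1 / 2 - 5 / 96` comes from the fourth-order Taylor bound for the cosine.
  have s2 : ∫ t in Ioc (0 : ℝ) 1, (43 / 96 : ℝ) ≤
      ∫ t in Ioc (0 : ℝ) 1, (1 - Real.cos t) * t ^ (-2 : ℝ) := by
    refine setIntegral_mono_on (by simp) (hI.mono_set fun t ht => ht.1) measurableSet_Ioc
      fun t ht => ?_
    have h := (abs_le.1 (Real.cos_bound (x := t) (by rw [abs_of_pos ht.1]; exact ht.2))).2
    rw [abs_of_pos ht.1] at h
    rw [Real.rpow_neg ht.1.le, Real.rpow_two, ← div_eq_mul_inv, le_div_iff₀ (by have := ht.1; positivity)]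
    have : t ^ 4 ≤ t ^ 2 := pow_le_pow_of_le_one ht.1.le ht.2 (by norm_num)
    nlinarith
  have s3 : ∫ t in Ioc (1 : ℝ) Real.pi, (2 / Real.pi ^ 2 : ℝ) ≤
      ∫ t in Ioc (1 : ℝ) Real.pi, (1 - Real.cos t) * t ^ (-2 : ℝ) := by
    refine setIntegral_mono_on (by simp) (hI.mono_set fun t ht => one_pos.trans ht.1)
      measurableSet_Ioc fun t ht => ?_
    have ht0 : 0 < t := one_pos.trans ht.1
    have h := Real.cos_le_one_sub_mul_cos_sq (x := t) (by rw [abs_of_pos ht0]; exact ht.2)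
    rw [Real.rpow_neg ht0.le, Real.rpow_two, ← div_eq_mul_inv, le_div_iff₀ (by positivity)]
    linarith
  have hu := setIntegral_union (μ := volume) (f := fun t : ℝ => (1 - Real.cos t) * t ^ (-2 : ℝ))
    (Ioc_disjoint_Ioc_of_le (le_refl (1 : ℝ)) (a := 0) (d := Real.pi)) measurableSet_Ioc
    (hI.mono_set fun t ht => ht.1) (hI.mono_set fun t ht => one_pos.trans ht.1)
  rw [Ioc_union_Ioc_eq_Ioc zero_le_one (by linarith)] at hu
  rw [setIntegral_const, Real.volume_real_Ioc_of_le (by linarith), smul_eq_mul] at s2 s3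
  have s4 : 0.4 ≤ (Real.pi - 1) * (2 / Real.pi ^ 2) := by
    rw [mul_div_assoc', le_div_iff₀ (by positivity)]
    nlinarith
  linarith

/-! ### Rotations and second differences in the weighted Bergman norm -/

/-- The symmetric second difference of `f` along the circle through `z`. -/
def angDiff (f : ℂ → ℂ) (t : ℝ) (z : ℂ) : ℂ :=
  f (Complex.exp (t * Complex.I) * z) + f (Complex.exp (-t * Complex.I) * z) - 2 * f z

theorem exp_mul_mem_unitDisc (t : ℝ) {z : ℂ} (hz : z ∈ unitDisc) :
    Complex.exp (t * Complex.I) * z ∈ unitDisc ∧ Complex.exp (-t * Complex.I) * z ∈ unitDisc := by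
  have h : -(t : ℂ) * Complex.I = ((-t : ℝ) : ℂ) * Complex.I := by push_cast; ring
  simp only [unitDisc, mem_ball_zero_iff, h, norm_mul, Complex.norm_exp_ofReal_mul_I,
    one_mul] at *
  exact ⟨hz, hz⟩

theorem wt_nonneg {α : ℝ} (hα : -1 < α) {z : ℂ} (hz : z ∈ unitDisc) : 0 ≤ wt α z := by
  have h : ‖z‖ < 1 := by simpa [unitDisc] using hz
  have : 0 ≤ 1 - ‖z‖ ^ 2 := by nlinarith [norm_nonneg z]
  exact mul_nonneg (div_nonneg (by linarith) Real.pi_pos.le) (Real.rpow_nonneg this _)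

theorem continuousOn_wt (α : ℝ) : ContinuousOn (wt α) unitDisc := by
  refine continuousOn_const.mul (ContinuousOn.rpow_const (by fun_prop) fun z hz => Or.inl ?_)
  have h : ‖z‖ < 1 := by simpa [unitDisc] using hz
  nlinarith [norm_nonneg z]

/-- The weighted area measure is invariant under rotations. -/
theorem integrableOn_rotate {p α : ℝ} {f : ℂ → ℂ}
    (hf : IntegrableOn (fun z => ‖f z‖ ^ p * wt α z) unitDisc) (t : ℝ) :
    IntegrableOn (fun z => ‖f (Complex.exp (t * Complex.I) * z)‖ ^ p * wt α z) unitDisc := by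
  set R := rotation (Circle.exp t)
  have hR : MeasurePreserving R volume volume := R.measurePreserving
  have h := (hR.integrableOn_comp_preimage R.toHomeomorph.measurableEmbedding).2 hf
  have hd : R ⁻¹' unitDisc = unitDisc := by
    ext z
    rw [mem_preimage, unitDisc, mem_ball_zero_iff, mem_ball_zero_iff, R.norm_map]
  rw [hd] at h
  refine h.congr_fun (fun z _ => ?_) isOpen_ball.measurableSet
  simp [R, wt, rotation_apply, Circle.coe_exp]

theorem continuousOn_angDiff {f : ℂ → ℂ} (hf : ContinuousOn f unitDisc) (t : ℝ) :
    ContinuousOn (angDiff f t) unitDisc := by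
  refine ((hf.comp (by fun_prop) fun z hz => (exp_mul_mem_unitDisc t hz).1).add
    (hf.comp (by fun_prop) fun z hz => (exp_mul_mem_unitDisc t hz).2)).sub
    (continuousOn_const.mul hf)

theorem integrableOn_angDiff {p α : ℝ} (hp : 1 < p) (hα : -1 < α) {f : ℂ → ℂ} (hf : MemAp p α f)
    (t : ℝ) : IntegrableOn (fun z => ‖angDiff f t z‖ ^ p * wt α z) unitDisc := by
  have hp0 : 0 < p := by linarith
  have i1 := integrableOn_rotate hf.2 t
  have i2 := integrableOn_rotate hf.2 (-t)
  have h : ((-t : ℝ) : ℂ) * Complex.I = -(t : ℂ) * Complex.I := by push_cast; ring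
  rw [h] at i2
  have hms : MeasurableSet unitDisc := isOpen_ball.measurableSet
  refine Integrable.mono' (((i1.add i2).add hf.2).const_mul (4 ^ p)) ?_ ?_
  · refine ContinuousOn.aestronglyMeasurable ?_ hms
    exact ((continuousOn_angDiff hf.1.continuousOn t).norm.rpow_const
      fun _ _ => Or.inr hp0.le).mul (continuousOn_wt α)
  · refine (ae_restrict_iff' hms).2 (Filter.Eventually.of_forall fun z hz => ?_)
    have hw := wt_nonneg hα hz
    simp only [Pi.add_apply]
    rw [Real.norm_of_nonneg (by positivity), ← add_mul, ← add_mul, ← mul_assoc]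
    refine mul_le_mul_of_nonneg_right ?_ hw
    rw [angDiff]
    set a := f (Complex.exp (t * Complex.I) * z)
    set b := f (Complex.exp (-t * Complex.I) * z)
    have hb : ‖a + b - 2 * f z‖ ≤ ‖a‖ + ‖b‖ + 2 * ‖f z‖ := by
      refine (norm_sub_le _ _).trans (add_le_add (norm_add_le _ _) ?_)
      simp
    -- `‖a + b - 2c‖ ≤ 4 max(‖a‖, ‖b‖, ‖c‖)`, and the `p`-th power of a maximum is at most
    -- the sum of the `p`-th powers.
    obtain ⟨c, hc0, hc, hcp⟩ : ∃ c, 0 ≤ c ∧ ‖a + b - 2 * f z‖ ≤ 4 * c ∧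
        c ^ p ≤ ‖a‖ ^ p + ‖b‖ ^ p + ‖f z‖ ^ p := by
      have ha' := Real.rpow_nonneg (norm_nonneg a) p
      have hb' := Real.rpow_nonneg (norm_nonneg b) p
      have hc' := Real.rpow_nonneg (norm_nonneg (f z)) p
      by_cases h1 : ‖b‖ ≤ ‖a‖ ∧ ‖f z‖ ≤ ‖a‖
      · exact ⟨‖a‖, norm_nonneg _, by linarith [h1.1, h1.2], by linarith⟩
      by_cases h2 : ‖f z‖ ≤ ‖b‖ ∧ ‖a‖ ≤ ‖b‖
      · exact ⟨‖b‖, norm_nonneg _, by linarith [h2.1, h2.2], by linarith⟩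
      refine ⟨‖f z‖, norm_nonneg _, ?_, by linarith⟩
      by_contra!
      rcases le_total ‖b‖ ‖a‖ with h | h
      · exact h1 ⟨h, by by_contra!; linarith⟩
      · exact h2 ⟨by by_contra!; linarith, h⟩
    calc ‖a + b - 2 * f z‖ ^ p ≤ (4 * c) ^ p := Real.rpow_le_rpow (norm_nonneg _) hc hp0.le
      _ = 4 ^ p * c ^ p := Real.mul_rpow (by norm_num) hc0
      _ ≤ _ := by gcongr

/-- The measure `dA_α` on the disc. -/
def discMeasure (α : ℝ) : Measure ℂ :=
  (volume.restrict unitDisc).withDensity fun z => ENNReal.ofReal (wt α z)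

instance (α : ℝ) : SFinite (discMeasure α) := by unfold discMeasure; infer_instance

theorem measurable_wt (α : ℝ) : Measurable (wt α) := by unfold wt; fun_prop

/-- The power integral of `h` over the disc as an integral against `discMeasure`; `G` is a globally
measurable function that agrees with the norm of `h` on the disc. -/
theorem lintegral_discMeasure {p α : ℝ} (hp : 0 < p) {G : ℂ → ENNReal}
    (hG : Measurable G) {h : ℂ → ℂ} (hGh : ∀ z ∈ unitDisc, G z = ‖h z‖ₑ) :
    ∫⁻ z, G z ^ p ∂discMeasure α =
      ∫⁻ z in unitDisc, ENNReal.ofReal (‖h z‖ ^ p * wt α z) := by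
  rw [discMeasure, lintegral_withDensity_eq_lintegral_mul _ (measurable_wt α).ennreal_ofReal
    (hG.pow_const p)]
  refine setLIntegral_congr_fun isOpen_ball.measurableSet fun z hz => ?_
  simp only [Pi.mul_apply]
  rw [hGh z hz, ENNReal.ofReal_mul (by positivity), mul_comm, ← ofReal_norm,
    ENNReal.ofReal_rpow_of_nonneg (norm_nonneg _) hp.le]

theorem lintegral_angDiff_le {p α β M : ℝ} (hp : 1 < p) (hα : -1 < α) {f : ℂ → ℂ}
    (hf : MemAp p α f) {t : ℝ} (hM : bNorm p α (angDiff f t) ≤ M * |t| ^ β)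
    {G : ℂ → ENNReal} (hG : Measurable G) (hGh : ∀ z ∈ unitDisc, G z = ‖angDiff f t z‖ₑ) :
    ∫⁻ z, G z ^ p ∂discMeasure α ≤ ENNReal.ofReal (M * |t| ^ β) ^ p := by
  have hp0 : 0 < p := by linarith
  have hnn : ∀ z ∈ unitDisc, 0 ≤ ‖angDiff f t z‖ ^ p * wt α z := fun z hz =>
    mul_nonneg (by positivity) (wt_nonneg hα hz)
  rw [lintegral_discMeasure hp0 hG hGh, ← ofReal_integral_eq_lintegral_ofReal
    (integrableOn_angDiff hp hα hf t)
    ((ae_restrict_iff' isOpen_ball.measurableSet).2 (Filter.Eventually.of_forall hnn))]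
  have hX : 0 ≤ ∫ z in unitDisc, ‖angDiff f t z‖ ^ p * wt α z :=
    setIntegral_nonneg isOpen_ball.measurableSet hnn
  rw [bNorm] at hM
  have hB := (Real.rpow_nonneg hX (1 / p)).trans hM
  rw [ENNReal.ofReal_rpow_of_nonneg hB hp0.le]
  refine ENNReal.ofReal_le_ofReal ?_
  have := Real.rpow_le_rpow (Real.rpow_nonneg hX _) hM hp0.le
  rwa [← Real.rpow_mul hX, one_div_mul_cancel hp0.ne', Real.rpow_one] at this

/-! ### The polynomial approximant -/

/-- The kernel coefficient at frequency `k` for the scale `n / 2`. -/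
def vpCoef (n k : ℕ) : ℝ := ∫ s in Ioi (0 : ℝ), 2 * Real.cos (k * (2 / n * s)) * vpKernel s

theorem vpCoef_eq_zero {n k : ℕ} (hn : 1 ≤ n) (hk : n ≤ k) : vpCoef n k = 0 := by
  have hn0 : (0 : ℝ) < n := by exact_mod_cast hn
  have h := integral_cos_mul_vpKernel (x := k * (2 / n)) (by
    rw [mul_div_assoc', le_div_iff₀ hn0]
    have : (n : ℝ) ≤ k := by exact_mod_cast hk
    linarith)
  rw [vpCoef]
  simp_rw [mul_assoc (2 : ℝ), ← mul_assoc (k : ℝ)]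
  rw [integral_const_mul, h, mul_zero]

/-- The Taylor coefficients at the origin. -/
def taylorCoef (f : ℂ → ℂ) (k : ℕ) : ℂ := (k.factorial : ℂ)⁻¹ * iteratedDeriv k f 0

theorem hasSum_taylor {f : ℂ → ℂ} (hf : DifferentiableOn ℂ f unitDisc) {z : ℂ}
    (hz : z ∈ unitDisc) : HasSum (fun k => taylorCoef f k * z ^ k) (f z) := by
  have h := Complex.hasSum_taylorSeries_on_ball hf hz
  refine h.congr_fun fun k => ?_
  simp only [taylorCoef, smul_eq_mul, sub_zero]; ring

theorem hasSum_angDiff {f : ℂ → ℂ} (hf : DifferentiableOn ℂ f unitDisc) {z : ℂ}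
    (hz : z ∈ unitDisc) (t : ℝ) :
    HasSum (fun k : ℕ => taylorCoef f k * z ^ k * ((2 * Real.cos (k * t) - 2 : ℝ) : ℂ))
      (angDiff f t z) := by
  have h := ((hasSum_taylor hf (exp_mul_mem_unitDisc t hz).1).add
    (hasSum_taylor hf (exp_mul_mem_unitDisc t hz).2)).sub ((hasSum_taylor hf hz).mul_left 2)
  refine h.congr_fun fun k => ?_
  have h2 : 2 * Complex.cos (k * t) = _ := Complex.two_cos (k * t)
  push_cast
  rw [h2, mul_pow, mul_pow, ← Complex.exp_nat_mul, ← Complex.exp_nat_mul]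
  ring_nf

/-- Averaging `f(e^{it}z) + f(e^{-it}z)` against the kernel multiplies the Taylor coefficients by
`vpCoef`. That average is written as the integral of the second difference plus
`2 * fejerMass * f z`. -/
theorem hasSum_integral_angDiff {f : ℂ → ℂ} (hf : DifferentiableOn ℂ f unitDisc) {z : ℂ}
    (hz : z ∈ unitDisc) (n : ℕ) :
    HasSum (fun k : ℕ => taylorCoef f k * z ^ k * ((vpCoef n k : ℝ) : ℂ))
      ((∫ s in Ioi (0 : ℝ), angDiff f (2 / n * s) z * (vpKernel s : ℂ))
        + 2 * fejerMass * f z) := by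
  set c : ℕ → ℂ := fun k => taylorCoef f k * z ^ k
  have hc : Summable fun k => ‖c k‖ := (hasSum_taylor hf hz).summable.norm
  have hcos : ∀ k : ℕ, IntegrableOn
      (fun s : ℝ => 2 * Real.cos (k * (2 / n * s)) * vpKernel s) (Ioi 0) := fun k => by
    refine integrableOn_vpKernel.bdd_mul (c := 2)
      (by fun_prop) (Filter.Eventually.of_forall fun s => ?_)
    rw [norm_mul]
    have := Real.abs_cos_le_one (k * (2 / n * s))
    simp only [Real.norm_eq_abs, abs_two]; linarith
  set u : ℕ → ℝ → ℝ := fun k s => 2 * Real.cos (k * (2 / n * s)) * vpKernel s - 2 * vpKernel s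
  have hu : ∀ k, IntegrableOn (u k) (Ioi 0) := fun k =>
    (hcos k).sub (integrableOn_vpKernel.const_mul 2)
  have hui : ∀ k, ∫ s in Ioi (0 : ℝ), u k s = vpCoef n k - 2 * fejerMass := fun k => by
    rw [integral_sub (hcos k) (integrableOn_vpKernel.const_mul 2), integral_const_mul,
      integral_vpKernel, vpCoef]
  have hub : ∀ k, ∫ s in Ioi (0 : ℝ), ‖u k s‖ ≤ ∫ s in Ioi (0 : ℝ), 4 * ‖vpKernel s‖ := fun k => by
    refine integral_mono (hu k).norm (integrableOn_vpKernel.norm.const_mul 4) fun s => ?_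
    simp only [u, ← sub_mul, norm_mul]
    refine mul_le_mul_of_nonneg_right ?_ (norm_nonneg _)
    have h1 := Real.cos_le_one (k * (2 / n * s))
    have h2 := Real.neg_one_le_cos (k * (2 / n * s))
    rw [Real.norm_eq_abs, abs_le]; constructor <;> linarith
  have hF := hasSum_integral_of_summable_integral_norm (μ := volume.restrict (Ioi (0 : ℝ)))
    (F := fun k s => c k * (u k s : ℂ)) (fun k => (hu k).ofReal.const_mul _) (by
      simp only [norm_mul, Complex.norm_real]
      simp_rw [integral_const_mul]
      refine Summable.of_nonneg_of_le (fun k => by positivity) (fun k => ?_)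
        (hc.mul_right (∫ s in Ioi (0 : ℝ), 4 * ‖vpKernel s‖))
      exact mul_le_mul_of_nonneg_left (hub k) (norm_nonneg _))
  have ht : ∀ s : ℝ, ∑' k, c k * (u k s : ℂ) = angDiff f (2 / n * s) z * (vpKernel s : ℂ) := by
    intro s
    refine HasSum.tsum_eq ?_
    refine ((hasSum_angDiff hf hz (2 / n * s)).mul_right (vpKernel s : ℂ)).congr_fun fun k => ?_
    simp only [u, c]; push_cast; ring
  simp only [ht] at hF
  refine (hF.add ((hasSum_taylor hf hz).mul_left (2 * fejerMass : ℂ))).congr_fun fun k => ?_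
  rw [integral_const_mul, integral_complex_ofReal, hui]
  simp only [c]; push_cast; ring

/-- The de la Vallée Poussin mean of `f`, a polynomial of degree less than `n`. -/
def vpMean (f : ℂ → ℂ) (n : ℕ) : Polynomial ℂ :=
  ∑ k ∈ Finset.range n, Polynomial.C (taylorCoef f k * vpCoef n k / (2 * fejerMass)) *
    Polynomial.X ^ k

theorem natDegree_vpMean (f : ℂ → ℂ) (n : ℕ) : (vpMean f n).natDegree ≤ n := by
  refine Polynomial.natDegree_sum_le_of_forall_le _ _ fun k hk => ?_
  exact (Polynomial.natDegree_C_mul_X_pow_le _ _).trans (Finset.mem_range.1 hk).le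

theorem fejerMass_pos : 0 < fejerMass :=
  (div_pos Real.pi_pos (by norm_num)).trans_le pi_div_four_le_fejerMass

theorem sub_vpMean {f : ℂ → ℂ} (hf : DifferentiableOn ℂ f unitDisc) {z : ℂ}
    (hz : z ∈ unitDisc) {n : ℕ} (hn : 1 ≤ n) :
    f z - (vpMean f n).eval z = -((1 / (2 * fejerMass) : ℝ) : ℂ) *
      ∫ s in Ioi (0 : ℝ), angDiff f (2 / n * s) z * (vpKernel s : ℂ) := by
  have h1 := hasSum_integral_angDiff hf hz n
  have h2 : HasSum (fun k : ℕ => taylorCoef f k * z ^ k * ((vpCoef n k : ℝ) : ℂ)) _ :=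
    hasSum_sum_of_ne_finset_zero (s := Finset.range n) fun k hk => by
      rw [vpCoef_eq_zero hn (by simpa using hk)]; simp
  have h3 := h1.unique h2
  have hC : (fejerMass : ℂ) ≠ 0 := by exact_mod_cast fejerMass_pos.ne'
  have h4 : (vpMean f n).eval z = 1 / (2 * fejerMass) *
      ∑ k ∈ Finset.range n, taylorCoef f k * z ^ k * ((vpCoef n k : ℝ) : ℂ) := by
    rw [vpMean, Polynomial.eval_finsetSum, Finset.mul_sum]
    refine Finset.sum_congr rfl fun k _ => ?_
    simp only [Polynomial.eval_mul, Polynomial.eval_C, Polynomial.eval_pow, Polynomial.eval_X]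
    ring
  rw [h4, ← h3]
  push_cast
  field_simp
  ring

theorem enorm_sub_vpMean_le {f : ℂ → ℂ} (hf : DifferentiableOn ℂ f unitDisc) {z : ℂ}
    (hz : z ∈ unitDisc) {n : ℕ} (hn : 1 ≤ n) :
    ‖f z - (vpMean f n).eval z‖ₑ ≤ ENNReal.ofReal (1 / (2 * fejerMass)) *
      ∫⁻ s in Ioi (0 : ℝ), ‖angDiff f (2 / n * s) z‖ₑ * ENNReal.ofReal |vpKernel s| := by
  rw [sub_vpMean hf hz hn, enorm_mul]
  have h0 : (0 : ℝ) ≤ 1 / (2 * fejerMass) := by have := fejerMass_pos; positivity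
  gcongr
  · rw [enorm_neg, ← ofReal_norm, Complex.norm_real, Real.norm_of_nonneg h0]
  · refine (enorm_integral_le_lintegral_enorm _).trans_eq ?_
    congr 1; ext s
    rw [enorm_mul, ← ofReal_norm (vpKernel s : ℂ), Complex.norm_real, Real.norm_eq_abs]

/-- The integral of the scaled modulus of continuity against the kernel, which produces `A_β`. -/
theorem lintegral_modulus_mul_kernel {β M : ℝ} (hβ0 : 0 < β) (hβ1 : β < 1) (hM : 0 ≤ M) {n : ℕ}
    (hn : 1 ≤ n) :
    ∫⁻ s in Ioi (0 : ℝ), ENNReal.ofReal (M * |2 / n * s| ^ β) * ENNReal.ofReal |vpKernel s| =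
      ENNReal.ofReal (M * (2 / n) ^ β *
        ∫ t in Ioi (0 : ℝ), |Real.cos t - Real.cos (2 * t)| * t ^ (β - 2)) := by
  have hi := integrableOn_kernel (g := fun t => |Real.cos t - Real.cos (2 * t)|) (by fun_prop)
    (c := 3) (d := 2) hβ0.le hβ1 (fun t => by rw [abs_abs]; exact (abs_cos_sub_cos_le _).2)
    (fun t => by rw [abs_abs]; exact (abs_cos_sub_cos_le _).1)
  rw [← integral_const_mul, ofReal_integral_eq_lintegral_ofReal (hi.const_mul _)]
  · refine setLIntegral_congr_fun measurableSet_Ioi fun s hs => ?_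
    have hs0 : (0 : ℝ) < s := hs
    have hn0 : (0 : ℝ) < 2 / n := by
      have : (0 : ℝ) < n := by exact_mod_cast hn
      positivity
    rw [← ENNReal.ofReal_mul (by positivity)]
    congr 1
    rw [abs_of_pos (mul_pos hn0 hs0), Real.mul_rpow hn0.le hs0.le, vpKernel, abs_mul,
      abs_of_pos (Real.rpow_pos_of_pos hs0 _), sub_eq_add_neg β, Real.rpow_add hs0]
    ring
  · refine (ae_restrict_iff' measurableSet_Ioi).2 (Filter.Eventually.of_forall fun t ht => ?_)
    have ht0 : (0 : ℝ) < t := ht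
    simp only [Pi.zero_apply]
    positivity

theorem measurable_angDiff {g : ℂ → ℂ} (hg : Measurable g) (c : ℝ) :
    Measurable (Function.uncurry fun (s : ℝ) (z : ℂ) => ‖angDiff g (c * s) z‖ₑ) := by
  have h1 : Measurable fun q : ℝ × ℂ =>
      Complex.exp (((c * q.1 : ℝ) : ℂ) * Complex.I) * q.2 := by fun_prop
  have h2 : Measurable fun q : ℝ × ℂ =>
      Complex.exp (-((c * q.1 : ℝ) : ℂ) * Complex.I) * q.2 := by fun_prop
  exact (((hg.comp h1).add (hg.comp h2)).sub
    ((hg.comp measurable_snd).const_mul 2)).enorm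

theorem measurable_vpKernel : Measurable vpKernel := by unfold vpKernel; fun_prop

theorem bNorm_sub_vpMean_le {p α β M : ℝ} (hp : 1 < p) (hα : -1 < α) (hβ0 : 0 < β) (hβ1 : β < 1)
    (hM0 : 0 < M) {f : ℂ → ℂ} (hf : MemAp p α f)
    (hM : ∀ t : ℝ, bNorm p α (angDiff f t) ≤ M * |t| ^ β) {n : ℕ} (hn : 1 ≤ n) :
    bNorm p α (fun z => f z - (vpMean f n).eval z) ≤ 1 / (2 * fejerMass) * (M * (2 / n) ^ β *
        ∫ t in Ioi (0 : ℝ), |Real.cos t - Real.cos (2 * t)| * t ^ (β - 2)) := by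
  classical
  have hp0 : 0 < p := by linarith
  have hn0 : (0 : ℝ) < 2 / n := by
    have : (0 : ℝ) < n := by exact_mod_cast hn
    positivity
  have hms : MeasurableSet unitDisc := isOpen_ball.measurableSet
  set I := ∫ t in Ioi (0 : ℝ), |Real.cos t - Real.cos (2 * t)| * t ^ (β - 2)
  have hI : 0 ≤ I := setIntegral_nonneg measurableSet_Ioi fun t ht =>
    mul_nonneg (abs_nonneg _) (Real.rpow_nonneg (le_of_lt ht) _)
  have hN := fejerMass_pos
  -- Outside the disc `f` is arbitrary; cutting it off there makes it measurable.
  set g : ℂ → ℂ := unitDisc.indicator f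
  have hg : Measurable g := by
    have := hf.1.continuousOn.measurable_piecewise
      (continuousOn_const (c := (0 : ℂ)) (s := unitDiscᶜ)) hms
    simp only [g]
    rw [← Set.piecewise_eq_indicator]
    exact this
  have hgf : ∀ t : ℝ, ∀ z ∈ unitDisc, angDiff g t z = angDiff f t z := fun t z hz => by
    have h := exp_mul_mem_unitDisc t hz
    simp only [angDiff, g, indicator_of_mem hz, indicator_of_mem h.1, indicator_of_mem h.2]
  set G : ℝ → ℂ → ENNReal := fun s z => ‖angDiff g (2 / n * s) z‖ₑ
  have hG : Measurable (Function.uncurry G) := measurable_angDiff hg (2 / n)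
  have hk : Measurable fun s => ENNReal.ofReal |vpKernel s| :=
    (measurable_vpKernel.abs).ennreal_ofReal
  have hm : Measurable fun s : ℝ => ENNReal.ofReal (M * |2 / n * s| ^ β) := by fun_prop
  have hGs : ∀ s, Measurable (G s) := fun s => (measurable_angDiff hg (2 / n)).of_uncurry_left
  have hGm : ∀ s, ∫⁻ z, G s z ^ p ∂discMeasure α ≤
      ENNReal.ofReal (M * |2 / n * s| ^ β) ^ p := fun s => by
    refine lintegral_angDiff_le hp hα hf (hM _) (hGs s) fun z hz => ?_
    simp only [G, hgf _ z hz]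
  have hm0 : ∀ᵐ s : ℝ ∂volume.restrict (Ioi (0 : ℝ)),
      ENNReal.ofReal (M * |2 / n * s| ^ β) ≠ 0 ∧ ENNReal.ofReal (M * |2 / n * s| ^ β) ≠ ⊤ := by
    refine (ae_restrict_iff' measurableSet_Ioi).2 (Filter.Eventually.of_forall fun s hs => ?_)
    have hs0 : (0 : ℝ) < s := hs
    refine ⟨?_, ENNReal.ofReal_ne_top⟩
    rw [Ne, ENNReal.ofReal_eq_zero, not_le]
    positivity
  have hmink := lintegral_minkowski (discMeasure α) (volume.restrict (Ioi (0 : ℝ))) hp hG hm hk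
    hm0 hGm
  rw [lintegral_modulus_mul_kernel hβ0 hβ1 hM0.le hn] at hmink
  set H : ℂ → ENNReal := unitDisc.indicator fun z => ‖f z - (vpMean f n).eval z‖ₑ
  have hH : Measurable H := by
    have h1 : H = unitDisc.indicator fun z => ‖g z - (vpMean f n).eval z‖ₑ := by
      refine indicator_congr fun z hz => ?_
      simp only [g, indicator_of_mem hz]
    rw [h1]
    exact ((hg.sub (vpMean f n).continuous.measurable).enorm).indicator hms
  have hHG : ∫⁻ z, H z ^ p ∂discMeasure α ≤
      ENNReal.ofReal (1 / (2 * fejerMass) * (M * (2 / n) ^ β * I)) ^ p := by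
    calc ∫⁻ z, H z ^ p ∂discMeasure α
        ≤ ∫⁻ z, ENNReal.ofReal (1 / (2 * fejerMass)) ^ p *
          (∫⁻ s in Ioi (0 : ℝ), G s z * ENNReal.ofReal |vpKernel s|) ^ p ∂discMeasure α := by
          refine lintegral_mono fun z => ?_
          rw [← ENNReal.mul_rpow_of_nonneg _ _ hp0.le]
          refine ENNReal.rpow_le_rpow ?_ hp0.le
          by_cases hz : z ∈ unitDisc
          · simp only [H, G, indicator_of_mem hz, hgf _ z hz]
            exact enorm_sub_vpMean_le hf.1 hz hn
          · simp [H, indicator_of_notMem hz]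
      _ ≤ ENNReal.ofReal (1 / (2 * fejerMass)) ^ p * ENNReal.ofReal (M * (2 / n) ^ β * I) ^ p := by
          rw [lintegral_const_mul' _ _ (by simp [hp0.le])]
          gcongr
      _ = _ := by
          rw [← ENNReal.mul_rpow_of_nonneg _ _ hp0.le, ← ENNReal.ofReal_mul (by positivity)]
  rw [lintegral_discMeasure hp0 hH (fun z hz => indicator_of_mem hz _)] at hHG
  rw [bNorm]
  set Y := ∫ z in unitDisc, ‖f z - (vpMean f n).eval z‖ ^ p * wt α z
  set B := 1 / (2 * fejerMass) * (M * (2 / n) ^ β * I)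
  have hB : 0 ≤ B := by positivity
  have hY0 : 0 ≤ Y := setIntegral_nonneg hms fun z hz =>
    mul_nonneg (by positivity) (wt_nonneg hα hz)
  have hY : ENNReal.ofReal Y ≤ ENNReal.ofReal (B ^ p) := by
    rw [← ENNReal.ofReal_rpow_of_nonneg hB hp0.le]
    refine le_trans ?_ hHG
    rw [← Real.enorm_of_nonneg hY0]
    refine (enorm_integral_le_lintegral_enorm _).trans (setLIntegral_mono' hms fun z hz => ?_)
    rw [Real.enorm_of_nonneg (mul_nonneg (by positivity) (wt_nonneg hα hz))]
  have hY' : Y ≤ B ^ p := (ENNReal.ofReal_le_ofReal_iff (by positivity)).1 hY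
  calc Y ^ (1 / p) ≤ (B ^ p) ^ (1 / p) := Real.rpow_le_rpow hY0 hY' (by positivity)
    _ = B := by rw [← Real.rpow_mul hB, mul_one_div_cancel hp0.ne', Real.rpow_one]

theorem bNorm_nonneg {p α : ℝ} (hα : -1 < α) (h : ℂ → ℂ) : 0 ≤ bNorm p α h :=
  Real.rpow_nonneg (setIntegral_nonneg isOpen_ball.measurableSet fun _ hz =>
    mul_nonneg (by positivity) (wt_nonneg hα hz)) _

theorem polyErr_le_of_pos {p α β M : ℝ} (hp : 1 < p) (hα : -1 < α) (hβ0 : 0 < β) (hβ1 : β < 1)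
    (hM0 : 0 < M) {f : ℂ → ℂ} (hf : MemAp p α f)
    (hM : ∀ t : ℝ, bNorm p α (angDiff f t) ≤ M * |t| ^ β) {n : ℕ} (hn : 1 ≤ n) :
    polyErr p α n f ≤ Acoef β * M * (n : ℝ) ^ (-β) := by
  have hle : polyErr p α n f ≤ bNorm p α (fun z => f z - (vpMean f n).eval z) := by
    refine csInf_le ⟨0, ?_⟩ ⟨_, natDegree_vpMean f n, rfl⟩
    rintro _ ⟨P, _, rfl⟩
    exact bNorm_nonneg hα _
  refine (hle.trans (bNorm_sub_vpMean_le hp hα hβ0 hβ1 hM0 hf hM hn)).trans ?_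
  rw [Acoef]
  set I := ∫ t in Ioi (0 : ℝ), |Real.cos t - Real.cos (2 * t)| * t ^ (β - 2)
  have hI : 0 ≤ I := setIntegral_nonneg measurableSet_Ioi fun t ht =>
    mul_nonneg (abs_nonneg _) (Real.rpow_nonneg (le_of_lt ht) _)
  have hn0 : (0 : ℝ) < n := by exact_mod_cast hn
  have h1 : 1 / (2 * fejerMass) ≤ 2 / Real.pi := by
    rw [div_le_div_iff₀ (by linarith [fejerMass_pos]) Real.pi_pos]
    linarith [pi_div_four_le_fejerMass]
  calc 1 / (2 * fejerMass) * (M * (2 / n) ^ β * I)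
      ≤ 2 / Real.pi * (M * (2 / n) ^ β * I) := by gcongr
    _ = _ := by
        rw [Real.div_rpow (by norm_num) hn0.le, Real.rpow_neg hn0.le,
          Real.rpow_add (by norm_num), Real.rpow_one]
        ring

/-- If `f ∈ A^p_α` satisfies the mean Zygmund-Hölder condition
`‖f(e^{it}·) + f(e^{-it}·) - 2f(·)‖_{p,α} ≤ M|t|^β` with `0 < β < 1`, then
`E_n^{p,α}(f) ≤ A_β M n^{-β}` for every `n ≥ 1`. -/
theorem polyErr_le_of_mean_holder
    (p α β M : ℝ) (hp : 1 < p) (hα : -1 < α) (hβ0 : 0 < β) (hβ1 : β < 1)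
    (f : ℂ → ℂ) (hf : MemAp p α f)
    (hM : ∀ t : ℝ, bNorm p α (fun z =>
        f (Complex.exp (t * Complex.I) * z)
          + f (Complex.exp (-t * Complex.I) * z) - 2 * f z) ≤ M * |t| ^ β)
    (n : ℕ) (hn : 1 ≤ n) :
    polyErr p α n f ≤ Acoef β * M * (n : ℝ) ^ (-β) := by
  have hM0 : 0 ≤ M := by simpa using (bNorm_nonneg hα _).trans (hM 1)
  -- Minkowski's inequality is applied with a modulus that does not vanish, so a positive
  -- `ε` is added to `M`.
  have hε : ∀ ε > 0, polyErr p α n f ≤ Acoef β * (M + ε) * (n : ℝ) ^ (-β) := fun ε hε =>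
    polyErr_le_of_pos hp hα hβ0 hβ1 (by linarith) hf (fun t => (hM t).trans (by
      gcongr; linarith)) hn
  refine ge_of_tendsto (x := nhdsWithin 0 (Ioi (0 : ℝ))) ?_
    (Filter.eventually_of_mem self_mem_nhdsWithin hε)
  have : Continuous fun ε : ℝ => Acoef β * (M + ε) * (n : ℝ) ^ (-β) := by fun_prop
  simpa using (this.tendsto 0).mono_left nhdsWithin_le_nhds
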